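/- arXiv:2404.15407 — 2 statements merged into one kernel-verified Lean document; each statement's English description precedes it below -/
import Mathlib

section
/- In the orthonormal chain basis indexed by positively oriented k-simplices, the matrix elements of the full weighted combinatorial Laplacian are: (Δ_k)_{σ,σ'} = Σ_{u∈up(σ)} w(u)² + Σ_{v∈σ} w(v)² if σ = σ'; = w(v_σ)w(v_{σ'}) if σ ∼↓ σ' and σ ≁↑ σ̄'; = −w(v_σ)w(v_{σ'}) if σ ∼↓ σ̄' and σ ≁↑ σ'; = 0 otherwise, for all σ, σ' ∈ X_k^+. -/
open BigOperators Matrix Kronecker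

attribute [local instance] Classical.propDecidable

noncomputable section

namespace QWSC

/-- A finite abstract simplicial complex on the vertex set `Fin n`:
a family of vertex sets closed under taking subsets. -/
def IsComplex (n : ℕ) (X : Finset (Finset (Fin n))) : Prop :=
  ∀ s ∈ X, ∀ t ⊆ s, t ∈ X

/-- The weighted boundary operator `∂_k : C_k → C_{k-1}` written as a matrix in the
orthonormal chain bases (rows are indexed by `(k-1)`-simplices, columns by `k`-simplices;
a `k`-simplex has `k+1` vertices).  On the orthonormal basis vector of
`σ = {v_0 < … < v_k}` it has entries `(-1)^j w(v_j)` at the face `σ \ {v_j}`. -/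
def boundary (n : ℕ) (X : Finset (Finset (Fin n))) (w : Fin n → ℝ) (k : ℕ) :
    Matrix (Finset (Fin n)) (Finset (Fin n)) ℝ :=
  Matrix.of fun τ σ =>
    if σ ∈ X ∧ σ.card = k + 1 ∧ τ ⊆ σ ∧ τ.card = k then
      ∑ v ∈ σ \ τ, (-1 : ℝ) ^ ((σ.filter fun u => u < v).card) * w v
    else 0

/-- The weighted up Laplacian `Δ_k^{up} = ∂_{k+1} ∂_{k+1}^*`. -/
def upLap (n : ℕ) (X : Finset (Finset (Fin n))) (w : Fin n → ℝ) (k : ℕ) :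
    Matrix (Finset (Fin n)) (Finset (Fin n)) ℝ :=
  boundary n X w (k + 1) * (boundary n X w (k + 1))ᵀ

/-- The weighted down Laplacian `Δ_k^{down} = ∂_k^* ∂_k`. -/
def downLap (n : ℕ) (X : Finset (Finset (Fin n))) (w : Fin n → ℝ) (k : ℕ) :
    Matrix (Finset (Fin n)) (Finset (Fin n)) ℝ :=
  (boundary n X w k)ᵀ * boundary n X w k

/-- The weighted combinatorial Laplacian `Δ_k = Δ_k^{up} + Δ_k^{down}`. -/
def fullLap (n : ℕ) (X : Finset (Finset (Fin n))) (w : Fin n → ℝ) (k : ℕ) :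
    Matrix (Finset (Fin n)) (Finset (Fin n)) ℝ :=
  upLap n X w k + downLap n X w k

/-- `true` iff removing the vertex `v` from `σ` reverses the induced orientation,
i.e. the position of `v` in the increasing ordering of `σ` is odd. -/
def faceFlip (n : ℕ) (σ : Finset (Fin n)) (v : Fin n) : Bool :=
  decide ((σ.filter fun u => u < v).card % 2 = 1)

/-- An oriented simplex: a vertex set together with an orientation bit
(`false` = positively oriented, `true` = negatively oriented). -/
abbrev OSimp (n : ℕ) := Finset (Fin n) × Bool

/-- Up-adjacency `σ ∼↑ σ'` of oriented simplices: the vertex sets are distinct, their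
union is a common coface belonging to `X`, and the orientations induced on the common
coface by `σ` and by `σ'` agree. -/
def UpAdj (n : ℕ) (X : Finset (Finset (Fin n))) (σ σ' : OSimp n) : Prop :=
  σ.1 ≠ σ'.1 ∧ σ.1 ∪ σ'.1 ∈ X ∧ (σ.1 ∪ σ'.1).card = σ.1.card + 1 ∧
    σ'.1.card = σ.1.card ∧
    ∀ v ∈ σ'.1 \ σ.1, ∀ v' ∈ σ.1 \ σ'.1,
      xor σ.2 (faceFlip n (σ.1 ∪ σ'.1) v) = xor σ'.2 (faceFlip n (σ.1 ∪ σ'.1) v')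

/-- Down-adjacency `σ ∼↓ σ'` of oriented simplices: the vertex sets are distinct, they
share a common face (their intersection, of cardinality one less), and the orientations
induced on the common face by `σ` and by `σ'` agree. -/
def DownAdj (n : ℕ) (σ σ' : OSimp n) : Prop :=
  σ.1 ≠ σ'.1 ∧ (σ.1 ∩ σ'.1).card + 1 = σ.1.card ∧ σ'.1.card = σ.1.card ∧
    ∀ v ∈ σ.1 \ σ'.1, ∀ v' ∈ σ'.1 \ σ.1,
      xor σ.2 (faceFlip n σ.1 v) = xor σ'.2 (faceFlip n σ'.1 v')

/-- `up(σ)`: the vertices `u ∉ σ` with `σ ∪ {u} ∈ X`. -/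
def upSet (n : ℕ) (X : Finset (Finset (Fin n))) (σ : Finset (Fin n)) : Finset (Fin n) :=
  Finset.univ.filter fun u => u ∉ σ ∧ insert u σ ∈ X

/-- The set of `k`-simplices of `X` (those with `k+1` vertices). -/
def simplices (n : ℕ) (X : Finset (Finset (Fin n))) (k : ℕ) : Finset (Finset (Fin n)) :=
  X.filter fun s => s.card = k + 1

/-- Normalization constant `K^{up} = max_{σ∈X_k} Σ_{u∈V∖σ} Σ_{v∈σ∪{u}} w(u)w(v)`. -/
def Kup (n : ℕ) (X : Finset (Finset (Fin n))) (w : Fin n → ℝ) (k : ℕ) : ℝ :=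
  sSup {x : ℝ | ∃ σ ∈ X, σ.card = k + 1 ∧ x = ∑ u ∈ σᶜ, ∑ v ∈ insert u σ, w u * w v}

/-- Normalization constant `K^{down} = max_{σ∈X_k} Σ_{u∈σ} Σ_{v∈V∖(σ∖{u})} w(u)w(v)`. -/
def Kdown (n : ℕ) (X : Finset (Finset (Fin n))) (w : Fin n → ℝ) (k : ℕ) : ℝ :=
  sSup {x : ℝ | ∃ σ ∈ X, σ.card = k + 1 ∧ x = ∑ u ∈ σ, ∑ v ∈ (σ.erase u)ᶜ, w u * w v}

/-- Normalization constant `K = max_{σ∈X_k} (Σ_{v∈V} w(v)² + Σ_{u∈V∖σ} Σ_{v∈σ} w(u)w(v))`. -/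
def Kfull (n : ℕ) (X : Finset (Finset (Fin n))) (w : Fin n → ℝ) (k : ℕ) : ℝ :=
  sSup {x : ℝ | ∃ σ ∈ X, σ.card = k + 1 ∧
    x = (∑ v : Fin n, w v ^ 2) + ∑ u ∈ σᶜ, ∑ v ∈ σ, w u * w v}

/-- The `k`-th chain space `C_k`: the span of the basis vectors indexed by
`k`-simplices of `X`, inside the coordinate space of the orthonormal chain basis. -/
def chainSpace (n : ℕ) (X : Finset (Finset (Fin n))) (k : ℕ) :
    Submodule ℝ (Finset (Fin n) → ℝ) :=
  Submodule.span ℝ ((fun σ => Pi.single σ (1 : ℝ)) '' {σ | σ ∈ X ∧ σ.card = k + 1})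

/-- The state space `S_k = X_k^± ∪ {Θ}` of the walks; `none` is the absorbing state `Θ`. -/
abbrev SState (n : ℕ) := Option (OSimp n)

/-- A state is a member of `S_k`: either the absorbing state, or an oriented
`k`-simplex of `X`. -/
def valid (n : ℕ) (X : Finset (Finset (Fin n))) (k : ℕ) : SState n → Prop
  | none => True
  | some σ => σ.1 ∈ X ∧ σ.1.card = k + 1

/-- `η^{up}_σ = 1 − (1/K^{up}) Σ_{τ∈X_k^+} |(Δ_k^{up})_{τ,σ_+}|`. -/
def etaUp (n : ℕ) (X : Finset (Finset (Fin n))) (w : Fin n → ℝ) (k : ℕ) (σ : OSimp n) : ℝ :=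
  1 - (∑ τ ∈ simplices n X k, |upLap n X w k τ σ.1|) / Kup n X w k

/-- `η^{down}_σ = 1 − (1/K^{down}) Σ_{τ∈X_k^+} |(Δ_k^{down})_{τ,σ_+}|`. -/
def etaDown (n : ℕ) (X : Finset (Finset (Fin n))) (w : Fin n → ℝ) (k : ℕ) (σ : OSimp n) : ℝ :=
  1 - (∑ τ ∈ simplices n X k, |downLap n X w k τ σ.1|) / Kdown n X w k

/-- `η_σ = 1 − (1/K) Σ_{τ∈X_k^+} |(Δ_k)_{τ,σ_+}|`. -/
def etaFull (n : ℕ) (X : Finset (Finset (Fin n))) (w : Fin n → ℝ) (k : ℕ) (σ : OSimp n) : ℝ :=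
  1 - (∑ τ ∈ simplices n X k, |fullLap n X w k τ σ.1|) / Kfull n X w k

/-- The up-walk transition matrix `P^{up}` on `S_k`. -/
def Pup (n : ℕ) (X : Finset (Finset (Fin n))) (w : Fin n → ℝ) (k : ℕ) :
    SState n → SState n → ℝ
  | some σ, some σ' =>
      if σ.1 ∈ X ∧ σ.1.card = k + 1 ∧ σ'.1 ∈ X ∧ σ'.1.card = k + 1 then
        if σ = σ' then (∑ u ∈ upSet n X σ.1, w u ^ 2) / Kup n X w k
        else if UpAdj n X σ σ' then
          ((∑ v ∈ σ.1 \ σ'.1, w v) * (∑ v ∈ σ'.1 \ σ.1, w v)) / Kup n X w k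
        else 0
      else 0
  | some σ, none => if σ.1 ∈ X ∧ σ.1.card = k + 1 then etaUp n X w k σ else 0
  | none, none => 1
  | none, some _ => 0

/-- The down-walk transition matrix `P^{down}` on `S_k`. -/
def Pdown (n : ℕ) (X : Finset (Finset (Fin n))) (w : Fin n → ℝ) (k : ℕ) :
    SState n → SState n → ℝ
  | some σ, some σ' =>
      if σ.1 ∈ X ∧ σ.1.card = k + 1 ∧ σ'.1 ∈ X ∧ σ'.1.card = k + 1 then
        if σ = σ' then (∑ v ∈ σ.1, w v ^ 2) / Kdown n X w k
        else if DownAdj n σ σ' then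
          ((∑ v ∈ σ.1 \ σ'.1, w v) * (∑ v ∈ σ'.1 \ σ.1, w v)) / Kdown n X w k
        else 0
      else 0
  | some σ, none => if σ.1 ∈ X ∧ σ.1.card = k + 1 then etaDown n X w k σ else 0
  | none, none => 1
  | none, some _ => 0

/-- The harmonic-walk transition matrix `P` on `S_k`. -/
def Pharm (n : ℕ) (X : Finset (Finset (Fin n))) (w : Fin n → ℝ) (k : ℕ) :
    SState n → SState n → ℝ
  | some σ, some σ' =>
      if σ.1 ∈ X ∧ σ.1.card = k + 1 ∧ σ'.1 ∈ X ∧ σ'.1.card = k + 1 then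
        if σ = σ' then
          ((∑ u ∈ upSet n X σ.1, w u ^ 2) + ∑ v ∈ σ.1, w v ^ 2) / Kfull n X w k
        else if DownAdj n σ σ' ∧ ¬ UpAdj n X σ (σ'.1, !σ'.2) then
          ((∑ v ∈ σ.1 \ σ'.1, w v) * (∑ v ∈ σ'.1 \ σ.1, w v)) / Kfull n X w k
        else 0
      else 0
  | some σ, none => if σ.1 ∈ X ∧ σ.1.card = k + 1 then etaFull n X w k σ else 0
  | none, none => 1
  | none, some _ => 0

/-! ### Quantum encodings -/

/-- The computational basis of `(ℂ²)^{⊗(n+2)}`: `n` membership qubits, one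
orientation qubit, and one qubit flagging the absorbing state. -/
abbrev QIdx (n : ℕ) := (Fin n → Bool) × Bool × Bool

/-- The encoding of states of `S_k` as computational basis states:
`|σ⟩ = |x_σ⟩|s(σ)⟩|0⟩` and `|Θ⟩ = |0^n⟩|0⟩|1⟩`. -/
def encode (n : ℕ) : SState n → QIdx n
  | none => (fun _ => false, false, true)
  | some σ => (fun i => decide (i ∈ σ.1), σ.2, false)

/-- The all-zeros basis state `|0^{n+2}⟩`. -/
def zeroQ (n : ℕ) : QIdx n := (fun _ => false, false, false)

/-- The projector `Π_k^±` onto the span of the encoded oriented `k`-simplices of `X`. -/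
def PiPM (n : ℕ) (X : Finset (Finset (Fin n))) (k : ℕ) : Matrix (QIdx n) (QIdx n) ℂ :=
  Matrix.of fun p q =>
    if p = q ∧ ∃ σ : OSimp n, σ.1 ∈ X ∧ σ.1.card = k + 1 ∧ p = encode n (some σ) then 1 else 0

/-- The projector `Π_k` onto the span of the encoded positively oriented
`k`-simplices of `X`. -/
def PiK (n : ℕ) (X : Finset (Finset (Fin n))) (k : ℕ) : Matrix (QIdx n) (QIdx n) ℂ :=
  Matrix.of fun p q =>
    if p = q ∧ ∃ s ∈ X, s.card = k + 1 ∧ p = encode n (some (s, false)) then 1 else 0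

/-- Decode a basis state into the state of `S_k` it represents (if any). -/
def decodeQ (n : ℕ) : QIdx n → Option (SState n) := fun q =>
  if q.2.2 = false then some (some ((Finset.univ.filter fun i => q.1 i = true), q.2.1))
  else if q = encode n none then some none else none

/-- Identify a transition kernel `P` on `S_k` with the operator on `(ℂ²)^{⊗(n+2)}`
having `⟨σ'|P|σ⟩ = P_{σ,σ'}` for `σ, σ' ∈ S_k`, vanishing off the span of `S_k`. -/
def toQMat (n : ℕ) (P : SState n → SState n → ℝ) : Matrix (QIdx n) (QIdx n) ℂ :=
  Matrix.of fun q' q =>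
    match decodeQ n q, decodeQ n q' with
    | some σ, some σ' => (P σ σ' : ℂ)
    | _, _ => 0

/-- Identify a matrix indexed by vertex sets (acting on the chain space in the
orthonormal basis of positively oriented simplices) with an operator on
`(ℂ²)^{⊗(n+2)}` supported on the encoded positively oriented simplices. -/
def lapQ (n : ℕ) (L : Matrix (Finset (Fin n)) (Finset (Fin n)) ℝ) :
    Matrix (QIdx n) (QIdx n) ℂ :=
  Matrix.of fun q' q =>
    if q'.2.1 = false ∧ q'.2.2 = false ∧ q.2.1 = false ∧ q.2.2 = false then
      (L (Finset.univ.filter fun i => q'.1 i = true)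
         (Finset.univ.filter fun i => q.1 i = true) : ℂ)
    else 0

/-- The SWAP unitary exchanging the two `(n+2)`-qubit registers. -/
def swapMat (n : ℕ) : Matrix (QIdx n × QIdx n) (QIdx n × QIdx n) ℂ :=
  Matrix.of fun p q => if p.1 = q.2 ∧ p.2 = q.1 then 1 else 0

/-- The compression `(· ⊗ ⟨0^{n+2}|) W (· ⊗ |0^{n+2}⟩)` of an operator on two
`(n+2)`-qubit registers to the first register. -/
def compress (n : ℕ) (W : Matrix (QIdx n × QIdx n) (QIdx n × QIdx n) ℂ) :
    Matrix (QIdx n) (QIdx n) ℂ :=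
  Matrix.of fun q' q => W (q', zeroQ n) (q, zeroQ n)

/-- The compression `(· ⊗ ⟨0^α|) W (· ⊗ |0^α⟩)` of an operator on the system
register together with an `α`-qubit ancilla register. -/
def compressA (n α : ℕ) (W : Matrix (QIdx n × (Fin α → Bool)) (QIdx n × (Fin α → Bool)) ℂ) :
    Matrix (QIdx n) (QIdx n) ℂ :=
  Matrix.of fun q' q => W (q', fun _ => false) (q, fun _ => false)

/-- The gate `I^{⊗n} ⊗ (HZ) ⊗ I` acting on the orientation qubit, where `H` is the
Hadamard gate and `Z` the Pauli-Z gate. -/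
def hzGate (n : ℕ) : Matrix (QIdx n) (QIdx n) ℂ :=
  Matrix.of fun p q =>
    if p.1 = q.1 ∧ p.2.2 = q.2.2 then
      (if p.2.1 = false ∧ q.2.1 = true then -((Real.sqrt 2 : ℂ))⁻¹ else ((Real.sqrt 2 : ℂ))⁻¹)
    else 0

/-!
A product of two entries of the boundary matrix is nonzero only if both simplices cover, or are
covered by, the same simplex. For distinct `k`-simplices `σ, σ'` this singles out `σ ∪ σ'` in
`Δ_k^{up}` and `σ ∩ σ'` in `Δ_k^{down}`, and forces `σ = ρ ∪ {a}` and `σ' = ρ ∪ {b}` with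
`ρ = σ ∩ σ'`. Exactly one of `a`, `b` changes its position parity when the other vertex is added
to `ρ`, so the two contributions are `±w(a)w(b)` with opposite signs: they cancel if `ρ ∪ {a, b}`
is a simplex, and only the down part remains otherwise.
-/

section Finset

variable {α : Type*} {s t : Finset α} {a b : α}

theorem covBy_iff_subset_and_card_eq : s ⋖ t ↔ s ⊆ t ∧ s.card + 1 = t.card :=
  Finset.covBy_iff_exists_insert.trans Finset.exists_eq_insert_iff

variable [DecidableEq α]

theorem insert_inter_insert_of_ne (ha : a ∉ s) (hab : a ≠ b) :
    insert a s ∩ insert b s = s := by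
  rw [Finset.insert_inter_of_notMem (by simp [ha, hab]),
    Finset.inter_eq_left.2 (Finset.subset_insert b s)]

theorem insert_sdiff_insert_of_ne (ha : a ∉ s) (hab : a ≠ b) :
    insert a s \ insert b s = {a} := by
  rw [Finset.insert_sdiff_of_notMem s (by simp [ha, hab]),
    Finset.sdiff_eq_empty_iff_subset.2 (Finset.subset_insert b s), insert_empty_eq]

theorem insert_ne_insert_of_ne (ha : a ∉ s) (hab : a ≠ b) : insert a s ≠ insert b s :=
  ne_of_mem_of_not_mem' (Finset.mem_insert_self a s) (by simp [ha, hab])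

theorem insert_union_insert : insert a s ∪ insert b s = insert a (insert b s) := by
  rw [Finset.insert_union, Finset.union_eq_right.2 (Finset.subset_insert b s)]

theorem exists_eq_insert_of_inter_covBy (hs : s ∩ t ⋖ s) (ht : s ∩ t ⋖ t) :
    ∃ r a b, a ∉ r ∧ b ∉ r ∧ a ≠ b ∧ s = insert a r ∧ t = insert b r := by
  obtain ⟨a, ha, has⟩ := Finset.covBy_iff_exists_insert.1 hs
  obtain ⟨b, hb, hbt⟩ := Finset.covBy_iff_exists_insert.1 ht
  refine ⟨s ∩ t, a, b, ha, hb, ?_, has.symm, hbt.symm⟩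
  rintro rfl
  exact hs.ne (Finset.inter_eq_left.2 (has.symm.trans hbt).le)

end Finset

/-- The sign of an orientation bit, `false` being the positive orientation as in `OSimp`. -/
def orientationSign (o : Bool) : ℝ := bif o then -1 else 1

theorem orientationSign_xor (o o' : Bool) :
    orientationSign (xor o o') = orientationSign o * orientationSign o' := by
  cases o <;> cases o' <;> simp [orientationSign]

theorem orientationSign_not (o : Bool) : orientationSign (!o) = -orientationSign o := by
  cases o <;> simp [orientationSign]

theorem orientationSign_mul_self (o : Bool) : orientationSign o * orientationSign o = 1 := by
  cases o <;> simp [orientationSign]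

theorem xor_eq_xor_iff_xor_eq_xor : ∀ {x y z t : Bool}, xor x z = xor y t ↔ xor z t = xor x y := by
  decide

section Simplices

variable {n k : ℕ} {X : Finset (Finset (Fin n))} {w : Fin n → ℝ} {σ σ' τ ρ : Finset (Fin n)}
  {a b v v' : Fin n} {o o' : Bool}

theorem orientationSign_faceFlip :
    orientationSign (faceFlip n σ v) = (-1) ^ (σ.filter fun u => u < v).card := by
  rcases Nat.even_or_odd (σ.filter fun u => u < v).card with h | h
  · simp [orientationSign, faceFlip, h.neg_one_pow, Nat.even_iff.1 h]
  · simp [orientationSign, faceFlip, h.neg_one_pow, Nat.odd_iff.1 h]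

theorem faceFlip_insert (ha : a ∉ σ) :
    faceFlip n (insert a σ) v = xor (decide (a < v)) (faceFlip n σ v) := by
  by_cases h : a < v
  · have hcard := Finset.card_insert_of_notMem fun hmem => ha (Finset.filter_subset (· < v) σ hmem)
    rcases Nat.mod_two_eq_zero_or_one (σ.filter fun u => u < v).card with hσ | hσ <;>
      simp [faceFlip, Finset.filter_insert, h, hcard, Nat.add_mod, hσ]
  · simp [faceFlip, Finset.filter_insert, h]

theorem faceFlip_insert_self (hv : v ∉ σ) : faceFlip n (insert v σ) v = faceFlip n σ v := by
  simp [faceFlip_insert hv]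

theorem faceFlip_insert_xor_faceFlip_insert (ha : a ∉ ρ) (hb : b ∉ ρ) (hab : a ≠ b) :
    xor (faceFlip n (insert b ρ) a) (faceFlip n (insert a ρ) b) =
      !xor (faceFlip n ρ a) (faceFlip n ρ b) := by
  rw [faceFlip_insert ha, faceFlip_insert hb]
  rcases hab.lt_or_gt with h | h <;> simp [h, h.not_gt]

theorem boundary_insert (hv : v ∉ τ) (hX : insert v τ ∈ X) (hτ : τ.card = k) :
    boundary n X w k τ (insert v τ) = orientationSign (faceFlip n τ v) * w v := by
  have hcond : insert v τ ∈ X ∧ (insert v τ).card = k + 1 ∧ τ ⊆ insert v τ ∧ τ.card = k :=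
    ⟨hX, by rw [Finset.card_insert_of_notMem hv, hτ], Finset.subset_insert v τ, hτ⟩
  rw [boundary, Matrix.of_apply, if_pos hcond, Finset.insert_sdiff_cancel hv,
    Finset.sum_singleton, ← faceFlip_insert_self hv, orientationSign_faceFlip]

theorem boundary_erase (hX : σ ∈ X) (hσ : σ.card = k + 1) (hv : v ∈ σ) :
    boundary n X w k (σ.erase v) σ = orientationSign (faceFlip n (σ.erase v) v) * w v := by
  have hins : insert v (σ.erase v) = σ := Finset.insert_erase hv
  simpa only [hins] using boundary_insert (w := w) (k := k) (Finset.notMem_erase v σ)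
    (hins.symm ▸ hX) (by rw [Finset.card_erase_of_mem hv, hσ, Nat.add_sub_cancel])

theorem mem_and_covBy_of_boundary_ne_zero (h : boundary n X w k τ σ ≠ 0) : σ ∈ X ∧ τ ⋖ σ := by
  obtain ⟨hX, hσ, hsub, hτ⟩ := (ite_ne_right_iff.1 h).1
  exact ⟨hX, covBy_iff_subset_and_card_eq.2 ⟨hsub, by rw [hσ, hτ]⟩⟩

theorem boundary_mulVec_apply (f : Finset (Fin n) → ℝ) (hτ : τ.card = k) :
    (boundary n X w k *ᵥ f) τ =
      ∑ u ∈ upSet n X τ, orientationSign (faceFlip n τ u) * w u * f (insert u τ) := by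
  have hup {u : Fin n} : u ∈ upSet n X τ ↔ u ∉ τ ∧ insert u τ ∈ X := by simp [upSet]
  rw [Matrix.mulVec, dotProduct, eq_comm]
  refine Finset.sum_of_injOn (insert · τ) ?_ (fun _ _ => by simp) ?_ ?_
  · intro u hu u' _ h
    exact (Finset.insert_inj (hup.1 hu).1).1 h
  · intro σ _ hσ
    refine mul_eq_zero_of_left (of_not_not fun h => hσ ?_) _
    obtain ⟨hX, hcov⟩ := mem_and_covBy_of_boundary_ne_zero h
    obtain ⟨u, hu, rfl⟩ := Finset.covBy_iff_exists_insert.1 hcov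
    exact ⟨u, hup.2 ⟨hu, hX⟩, rfl⟩
  · intro u hu
    rw [boundary_insert (hup.1 hu).1 (hup.1 hu).2 hτ]

theorem vecMul_boundary_apply (f : Finset (Fin n) → ℝ) (hX : σ ∈ X) (hσ : σ.card = k + 1) :
    (f ᵥ* boundary n X w k) σ =
      ∑ v ∈ σ, f (σ.erase v) * (orientationSign (faceFlip n (σ.erase v) v) * w v) := by
  rw [Matrix.vecMul, dotProduct, eq_comm]
  refine Finset.sum_of_injOn σ.erase (Finset.erase_injOn σ) (fun _ _ => by simp) ?_ ?_
  · intro τ _ hτ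
    refine mul_eq_zero_of_right _ (of_not_not fun h => hτ ?_)
    exact Finset.covBy_iff_exists_erase.1 (mem_and_covBy_of_boundary_ne_zero h).2
  · intro v hv
    rw [boundary_erase hX hσ hv]

theorem upLap_apply_self (hσ : σ.card = k + 1) :
    upLap n X w k σ σ = ∑ u ∈ upSet n X σ, w u ^ 2 := by
  refine (boundary_mulVec_apply (boundary n X w (k + 1) σ) hσ).trans
    (Finset.sum_congr rfl fun u hu => ?_)
  obtain ⟨huσ, huX⟩ : u ∉ σ ∧ insert u σ ∈ X := by simpa [upSet] using hu
  rw [boundary_insert huσ huX hσ, mul_mul_mul_comm, orientationSign_mul_self, one_mul, sq]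

theorem downLap_apply_self (hX : σ ∈ X) (hσ : σ.card = k + 1) :
    downLap n X w k σ σ = ∑ v ∈ σ, w v ^ 2 := by
  refine (vecMul_boundary_apply (fun τ => boundary n X w k τ σ) hX hσ).trans
    (Finset.sum_congr rfl fun v hv => ?_)
  rw [boundary_erase hX hσ hv, mul_mul_mul_comm, orientationSign_mul_self, one_mul, sq]

theorem fullLap_apply_self (hX : σ ∈ X) (hσ : σ.card = k + 1) :
    fullLap n X w k σ σ = (∑ u ∈ upSet n X σ, w u ^ 2) + ∑ v ∈ σ, w v ^ 2 := by
  rw [fullLap, Matrix.add_apply, upLap_apply_self hσ, downLap_apply_self hX hσ]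

theorem upLap_apply_of_ne (hne : σ ≠ σ') :
    upLap n X w k σ σ' =
      boundary n X w (k + 1) σ (σ ∪ σ') * boundary n X w (k + 1) σ' (σ ∪ σ') := by
  refine Fintype.sum_eq_single (σ ∪ σ') fun τ hτ => of_not_not fun h => hτ ?_
  have hσ := (mem_and_covBy_of_boundary_ne_zero (left_ne_zero_of_mul h)).2
  have hσ' := (mem_and_covBy_of_boundary_ne_zero (right_ne_zero_of_mul h)).2
  exact (hσ.wcovBy.sup_eq hσ'.wcovBy hne).symm

theorem downLap_apply_of_ne (hne : σ ≠ σ') :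
    downLap n X w k σ σ' =
      boundary n X w k (σ ∩ σ') σ * boundary n X w k (σ ∩ σ') σ' := by
  refine Fintype.sum_eq_single (σ ∩ σ') fun τ hτ => of_not_not fun h => hτ ?_
  have hσ := (mem_and_covBy_of_boundary_ne_zero (left_ne_zero_of_mul h)).2
  have hσ' := (mem_and_covBy_of_boundary_ne_zero (right_ne_zero_of_mul h)).2
  exact (hσ.wcovBy.inf_eq hσ'.wcovBy hne).symm

theorem inter_covBy_of_fullLap_ne_zero (hne : σ ≠ σ') (h : fullLap n X w k σ σ' ≠ 0) :
    σ ∩ σ' ⋖ σ ∧ σ ∩ σ' ⋖ σ' := by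
  rw [fullLap, Matrix.add_apply, upLap_apply_of_ne hne, downLap_apply_of_ne hne] at h
  by_cases hup :
      boundary n X w (k + 1) σ (σ ∪ σ') * boundary n X w (k + 1) σ' (σ ∪ σ') = 0
  · rw [hup, zero_add] at h
    exact ⟨(mem_and_covBy_of_boundary_ne_zero (left_ne_zero_of_mul h)).2,
      (mem_and_covBy_of_boundary_ne_zero (right_ne_zero_of_mul h)).2⟩
  · exact ⟨inf_covBy_of_covBy_sup_right
        (mem_and_covBy_of_boundary_ne_zero (right_ne_zero_of_mul hup)).2,
      inf_covBy_of_covBy_sup_left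
        (mem_and_covBy_of_boundary_ne_zero (left_ne_zero_of_mul hup)).2⟩

theorem downLap_insert_insert (ha : a ∉ ρ) (hb : b ∉ ρ) (hab : a ≠ b) (hρ : ρ.card = k)
    (haX : insert a ρ ∈ X) (hbX : insert b ρ ∈ X) :
    downLap n X w k (insert a ρ) (insert b ρ) =
      orientationSign (xor (faceFlip n ρ a) (faceFlip n ρ b)) * (w a * w b) := by
  rw [downLap_apply_of_ne (insert_ne_insert_of_ne ha hab), insert_inter_insert_of_ne ha hab,
    boundary_insert ha haX hρ, boundary_insert hb hbX hρ, mul_mul_mul_comm, orientationSign_xor]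

theorem upLap_insert_insert_of_mem (ha : a ∉ ρ) (hb : b ∉ ρ) (hab : a ≠ b) (hρ : ρ.card = k)
    (habX : insert a (insert b ρ) ∈ X) :
    upLap n X w k (insert a ρ) (insert b ρ) =
      -(orientationSign (xor (faceFlip n ρ a) (faceFlip n ρ b)) * (w a * w b)) := by
  have hbaX : insert b (insert a ρ) ∈ X := by rwa [Finset.insert_comm]
  rw [upLap_apply_of_ne (insert_ne_insert_of_ne ha hab), insert_union_insert,
    boundary_insert (by simp [ha, hab]) habX (by rw [Finset.card_insert_of_notMem hb, hρ]),
    Finset.insert_comm,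
    boundary_insert (by simp [hb, hab.symm]) hbaX (by rw [Finset.card_insert_of_notMem ha, hρ]),
    mul_mul_mul_comm, ← orientationSign_xor, Bool.xor_comm,
    faceFlip_insert_xor_faceFlip_insert ha hb hab, orientationSign_not, neg_mul, mul_comm (w b)]

theorem upLap_insert_insert_of_notMem (ha : a ∉ ρ) (hab : a ≠ b)
    (habX : insert a (insert b ρ) ∉ X) : upLap n X w k (insert a ρ) (insert b ρ) = 0 := by
  rw [upLap_apply_of_ne (insert_ne_insert_of_ne ha hab), insert_union_insert]
  exact mul_eq_zero_of_left
    (of_not_not fun h => habX (mem_and_covBy_of_boundary_ne_zero h).1) _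

theorem fullLap_insert_insert (ha : a ∉ ρ) (hb : b ∉ ρ) (hab : a ≠ b) (hρ : ρ.card = k)
    (haX : insert a ρ ∈ X) (hbX : insert b ρ ∈ X) :
    fullLap n X w k (insert a ρ) (insert b ρ) =
      if insert a (insert b ρ) ∈ X then 0
      else orientationSign (xor (faceFlip n ρ a) (faceFlip n ρ b)) * (w a * w b) := by
  rw [fullLap, Matrix.add_apply, downLap_insert_insert ha hb hab hρ haX hbX]
  split_ifs with habX
  · rw [upLap_insert_insert_of_mem ha hb hab hρ habX, neg_add_cancel]
  · rw [upLap_insert_insert_of_notMem ha hab habX, zero_add]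

theorem downAdj_insert_insert (ha : a ∉ ρ) (hb : b ∉ ρ) (hab : a ≠ b) :
    DownAdj n (insert a ρ, o) (insert b ρ, o') ↔
      xor (faceFlip n ρ a) (faceFlip n ρ b) = xor o o' := by
  rw [← xor_eq_xor_iff_xor_eq_xor]
  simp [DownAdj, insert_ne_insert_of_ne ha hab, insert_inter_insert_of_ne ha hab,
    insert_sdiff_insert_of_ne ha hab, insert_sdiff_insert_of_ne hb hab.symm,
    Finset.card_insert_of_notMem ha, Finset.card_insert_of_notMem hb,
    faceFlip_insert_self ha, faceFlip_insert_self hb]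

theorem upAdj_insert_insert (ha : a ∉ ρ) (hb : b ∉ ρ) (hab : a ≠ b) :
    UpAdj n X (insert a ρ, o) (insert b ρ, o') ↔ insert a (insert b ρ) ∈ X ∧
      xor (faceFlip n ρ a) (faceFlip n ρ b) = !xor o o' := by
  have ha' : a ∉ insert b ρ := by simp [ha, hab]
  have hb' : b ∉ insert a ρ := by simp [hb, hab.symm]
  have hflip_a : faceFlip n (insert a (insert b ρ)) a = faceFlip n (insert b ρ) a :=
    faceFlip_insert_self ha'
  have hflip_b : faceFlip n (insert a (insert b ρ)) b = faceFlip n (insert a ρ) b := by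
    rw [Finset.insert_comm, faceFlip_insert_self hb']
  have horient : xor o (faceFlip n (insert a (insert b ρ)) b) =
      xor o' (faceFlip n (insert a (insert b ρ)) a) ↔
        xor (faceFlip n ρ a) (faceFlip n ρ b) = !xor o o' := by
    rw [xor_eq_xor_iff_xor_eq_xor, hflip_a, hflip_b, Bool.xor_comm,
      faceFlip_insert_xor_faceFlip_insert ha hb hab, Bool.not_eq_eq_eq_not]
  rw [← horient]
  simp only [UpAdj, insert_union_insert]
  simp [insert_ne_insert_of_ne ha hab, insert_sdiff_insert_of_ne ha hab,
    insert_sdiff_insert_of_ne hb hab.symm, Finset.card_insert_of_notMem ha',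
    Finset.card_insert_of_notMem ha, Finset.card_insert_of_notMem hb]

theorem exists_eq_insert_of_downAdj (h : DownAdj n (σ, o) (σ', o')) :
    ∃ ρ a b, a ∉ ρ ∧ b ∉ ρ ∧ a ≠ b ∧ σ = insert a ρ ∧ σ' = insert b ρ := by
  obtain ⟨-, hinter, hcard, -⟩ := h
  exact exists_eq_insert_of_inter_covBy
    (covBy_iff_subset_and_card_eq.2 ⟨Finset.inter_subset_left, hinter⟩)
    (covBy_iff_subset_and_card_eq.2 ⟨Finset.inter_subset_right, hinter.trans hcard.symm⟩)

theorem fullLap_apply_of_downAdj (hX : σ ∈ X) (hσ : σ.card = k + 1) (hX' : σ' ∈ X)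
    (hdown : DownAdj n (σ, o) (σ', o')) (hup : ¬ UpAdj n X (σ, o) (σ', !o'))
    (hv : v ∈ σ \ σ') (hv' : v' ∈ σ' \ σ) :
    fullLap n X w k σ σ' = orientationSign (xor o o') * (w v * w v') := by
  obtain ⟨ρ, a, b, ha, hb, hab, rfl, rfl⟩ := exists_eq_insert_of_downAdj hdown
  rw [insert_sdiff_insert_of_ne ha hab, Finset.mem_singleton] at hv
  rw [insert_sdiff_insert_of_ne hb hab.symm, Finset.mem_singleton] at hv'
  rw [downAdj_insert_insert ha hb hab] at hdown
  rw [Finset.card_insert_of_notMem ha, Nat.add_right_cancel_iff] at hσ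
  have hcoface : insert a (insert b ρ) ∉ X := fun h =>
    hup ((upAdj_insert_insert ha hb hab).2 ⟨h, by simp [hdown]⟩)
  rw [fullLap_insert_insert ha hb hab hσ hX hX', if_neg hcoface, hdown, hv, hv']

theorem fullLap_apply_eq_zero (hX : σ ∈ X) (hσ : σ.card = k + 1) (hX' : σ' ∈ X) (hne : σ ≠ σ')
    (h : ∀ o', DownAdj n (σ, false) (σ', o') → UpAdj n X (σ, false) (σ', !o')) :
    fullLap n X w k σ σ' = 0 := by
  by_contra hzero
  obtain ⟨hcov, hcov'⟩ := inter_covBy_of_fullLap_ne_zero hne hzero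
  obtain ⟨ρ, a, b, ha, hb, hab, rfl, rfl⟩ := exists_eq_insert_of_inter_covBy hcov hcov'
  rw [Finset.card_insert_of_notMem ha, Nat.add_right_cancel_iff] at hσ
  have hdown : DownAdj n (insert a ρ, false)
      (insert b ρ, xor (faceFlip n ρ a) (faceFlip n ρ b)) := by
    simp [downAdj_insert_insert ha hb hab]
  have hcoface := ((upAdj_insert_insert ha hb hab).1 (h _ hdown)).1
  rw [fullLap_insert_insert ha hb hab hσ hX hX', if_pos hcoface] at hzero
  exact hzero rfl

end Simplices

theorem fullLap_matrix_elements_general (n k : ℕ) (X : Finset (Finset (Fin n)))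
    (w : Fin n → ℝ) (σ σ' : Finset (Fin n)) (hσ : σ ∈ X) (hσc : σ.card = k + 1)
    (hσ' : σ' ∈ X) :
    (σ = σ' →
      fullLap n X w k σ σ' = (∑ u ∈ upSet n X σ, w u ^ 2) + ∑ v ∈ σ, w v ^ 2) ∧
    (DownAdj n (σ, false) (σ', false) → ¬ UpAdj n X (σ, false) (σ', true) →
      ∀ v ∈ σ \ σ', ∀ v' ∈ σ' \ σ, fullLap n X w k σ σ' = w v * w v') ∧
    (DownAdj n (σ, false) (σ', true) → ¬ UpAdj n X (σ, false) (σ', false) →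
      ∀ v ∈ σ \ σ', ∀ v' ∈ σ' \ σ, fullLap n X w k σ σ' = -(w v * w v')) ∧
    (σ ≠ σ' →
      ¬ (DownAdj n (σ, false) (σ', false) ∧ ¬ UpAdj n X (σ, false) (σ', true)) →
      ¬ (DownAdj n (σ, false) (σ', true) ∧ ¬ UpAdj n X (σ, false) (σ', false)) →
      fullLap n X w k σ σ' = 0) := by
  refine ⟨?_, fun hdown hup v hv v' hv' => ?_, fun hdown hup v hv v' hv' => ?_,
    fun hne hpos hneg => ?_⟩
  · rintro rfl
    exact fullLap_apply_self hσ hσc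
  · simpa [orientationSign] using fullLap_apply_of_downAdj hσ hσc hσ' hdown hup hv hv'
  · simpa [orientationSign] using fullLap_apply_of_downAdj hσ hσc hσ' hdown hup hv hv'
  · refine fullLap_apply_eq_zero hσ hσc hσ' hne fun o' hdown => of_not_not fun hup => ?_
    cases o'
    · exact hpos ⟨hdown, hup⟩
    · exact hneg ⟨hdown, hup⟩

/-- Matrix elements of the full weighted combinatorial Laplacian in the
orthonormal chain basis indexed by positively oriented `k`-simplices. -/
theorem fullLap_matrix_elements (n k : ℕ) (X : Finset (Finset (Fin n))) (hX : IsComplex n X)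
    (w : Fin n → ℝ) (hw : ∀ v, 0 < w v)
    (σ σ' : Finset (Fin n)) (hσ : σ ∈ X) (hσc : σ.card = k + 1)
    (hσ' : σ' ∈ X) (hσ'c : σ'.card = k + 1) :
    (σ = σ' →
      fullLap n X w k σ σ' = (∑ u ∈ upSet n X σ, w u ^ 2) + ∑ v ∈ σ, w v ^ 2) ∧
    (DownAdj n (σ, false) (σ', false) → ¬ UpAdj n X (σ, false) (σ', true) →
      ∀ v ∈ σ \ σ', ∀ v' ∈ σ' \ σ, fullLap n X w k σ σ' = w v * w v') ∧
    (DownAdj n (σ, false) (σ', true) → ¬ UpAdj n X (σ, false) (σ', false) →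
      ∀ v ∈ σ \ σ', ∀ v' ∈ σ' \ σ, fullLap n X w k σ σ' = -(w v * w v')) ∧
    (σ ≠ σ' →
      ¬ (DownAdj n (σ, false) (σ', false) ∧ ¬ UpAdj n X (σ, false) (σ', true)) →
      ¬ (DownAdj n (σ, false) (σ', true) ∧ ¬ UpAdj n X (σ, false) (σ', false)) →
      fullLap n X w k σ σ' = 0) := by
  exact fullLap_matrix_elements_general n k X w σ σ' hσ hσc hσ'

end QWSC
end
end

section
/- If σ and σ' are oriented k-simplices with distinct vertex sets and σ ∼↑ σ' (they are up-adjacent and oriented similarly), then σ ∼↓ σ̄' (σ and the oppositely oriented version of σ' are down-adjacent with the same induced orientation on their common lower face). -/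
open BigOperators Matrix Kronecker

attribute [local instance] Classical.propDecidable

noncomputable section

namespace QWSC

/-! Let `v` and `v'` be the vertices of `σ` outside `σ'` and of `σ'` outside `σ`. Both simplices are
facets of `τ = σ ∪ σ'`, namely `τ.erase v'` and `τ.erase v`, and their common face is reached from
`τ` by deleting `v` and `v'` in either order. As in `∂ ∘ ∂ = 0`, the two orders induce opposite
orientations there, so agreement on `τ` is the same as disagreement on `σ ∩ σ'`. -/

theorem faceFlip_eq_bodd (n : ℕ) (σ : Finset (Fin n)) (v : Fin n) :
    faceFlip n σ v = (σ.filter fun u => u < v).card.bodd := by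
  simp [faceFlip, Nat.mod_two_of_bodd]

theorem faceFlip_erase (n : ℕ) {τ : Finset (Fin n)} {a : Fin n} (ha : a ∈ τ) (b : Fin n) :
    faceFlip n (τ.erase a) b = xor (faceFlip n τ b) (decide (a < b)) := by
  rw [faceFlip_eq_bodd, faceFlip_eq_bodd, Finset.filter_erase]
  by_cases hab : a < b
  · have hmem : a ∈ τ.filter fun u => u < b := Finset.mem_filter.mpr ⟨ha, hab⟩
    simp [← Finset.card_erase_add_one hmem, hab]
  · have hnotMem : a ∉ τ.filter fun u => u < b := fun h => hab (Finset.mem_filter.mp h).2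
    rw [Finset.erase_eq_of_notMem hnotMem, decide_eq_false hab, Bool.xor_false]

theorem faceFlip_xor_faceFlip_erase_swap (n : ℕ) {τ : Finset (Fin n)} {a b : Fin n}
    (ha : a ∈ τ) (hb : b ∈ τ) (hab : a ≠ b) :
    xor (faceFlip n τ a) (faceFlip n (τ.erase a) b) =
      !xor (faceFlip n τ b) (faceFlip n (τ.erase b) a) := by
  have hlt : decide (b < a) = !decide (a < b) := by
    rw [← decide_not, decide_eq_decide, not_lt, hab.symm.le_iff_lt]
  rw [faceFlip_erase n ha, faceFlip_erase n hb, hlt]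
  cases faceFlip n τ a <;> cases faceFlip n τ b <;> simp

theorem erase_eq_of_subset_of_card_eq_succ {α : Type*} [DecidableEq α] {s t : Finset α} {a : α}
    (hst : s ⊆ t) (hcard : t.card = s.card + 1) (ha : a ∈ t \ s) : t.erase a = s := by
  obtain ⟨hat, has⟩ := Finset.mem_sdiff.mp ha
  refine (Finset.eq_of_subset_of_card_le (Finset.subset_erase.mpr ⟨hst, has⟩) ?_).symm
  rw [Finset.card_erase_of_mem hat, hcard, Nat.add_sub_cancel]

theorem card_union_eq_succ_iff_card_inter {α : Type*} [DecidableEq α] {s t : Finset α}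
    (hst : t.card = s.card) :
    (s ∪ t).card = s.card + 1 ↔ (s ∩ t).card + 1 = s.card := by
  have := Finset.card_union_add_card_inter s t
  omega

theorem xor_faceFlip_union_eq_iff (n : ℕ) {s t : Finset (Fin n)} {v v' : Fin n}
    (hcard : (s ∪ t).card = s.card + 1) (hst : t.card = s.card)
    (hv : v ∈ s \ t) (hv' : v' ∈ t \ s) (a b : Bool) :
    xor a (faceFlip n (s ∪ t) v') = xor b (faceFlip n (s ∪ t) v) ↔
      xor a (faceFlip n s v) = xor (!b) (faceFlip n t v') := by
  have hs : (s ∪ t).erase v' = s :=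
    erase_eq_of_subset_of_card_eq_succ Finset.subset_union_left hcard
      (by rwa [Finset.union_sdiff_left])
  have ht : (s ∪ t).erase v = t :=
    erase_eq_of_subset_of_card_eq_succ Finset.subset_union_right (hst ▸ hcard)
      (by rwa [Finset.union_sdiff_right])
  have hne : v' ≠ v :=
    ne_of_mem_of_not_mem (Finset.sdiff_subset hv') (Finset.mem_sdiff.mp hv).2
  have hswap := faceFlip_xor_faceFlip_erase_swap n
    (Finset.mem_union_right s (Finset.sdiff_subset hv'))
    (Finset.mem_union_left t (Finset.sdiff_subset hv)) hne
  rw [hs, ht] at hswap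
  have xor_iff : ∀ a b p q r s : Bool,
      xor p q = !xor r s → (xor a p = xor b r ↔ xor a q = xor (!b) s) := by decide
  exact xor_iff _ _ _ _ _ _ hswap

theorem upAdj_downAdj_opposite_general (n : ℕ) (X : Finset (Finset (Fin n))) (σ σ' : OSimp n) :
    UpAdj n X σ σ' ↔ σ.1 ∪ σ'.1 ∈ X ∧ DownAdj n σ (σ'.1, !σ'.2) := by
  constructor
  · rintro ⟨hne, hX, hunion, hcard, hagree⟩
    exact ⟨hX, hne, (card_union_eq_succ_iff_card_inter hcard).mp hunion, hcard,
      fun v hv v' hv' =>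
        (xor_faceFlip_union_eq_iff n hunion hcard hv hv' _ _).mp (hagree v' hv' v hv)⟩
  · rintro ⟨hX, hne, hinter, hcard, hagree⟩
    have hunion := (card_union_eq_succ_iff_card_inter hcard).mpr hinter
    exact ⟨hne, hX, hunion, hcard, fun v' hv' v hv =>
      (xor_faceFlip_union_eq_iff n hunion hcard hv hv' _ _).mpr (hagree v hv v' hv')⟩

/-- If oriented `k`-simplices `σ, σ'` (with distinct vertex sets) satisfy
`σ ∼↑ σ'`, then `σ ∼↓ σ̄'`. -/
theorem upAdj_downAdj_opposite (n k : ℕ) (X : Finset (Finset (Fin n))) (hX : IsComplex n X)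
    (σ σ' : OSimp n)
    (hσ : σ.1 ∈ X) (hσc : σ.1.card = k + 1) (hσ' : σ'.1 ∈ X) (hσ'c : σ'.1.card = k + 1)
    (h : UpAdj n X σ σ') :
    DownAdj n σ (σ'.1, !σ'.2) :=
  ((upAdj_downAdj_opposite_general n X σ σ').mp h).2

end QWSC
end
end
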